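/- arXiv:1903.00236 — 4 statements merged into one kernel-verified Lean document; each statement's English description precedes it below -/
import Mathlib

section
/- Suppose X is complete, A is closed, I and φ are lower semicontinuous on X, and there exist a feasible point x₀ ∈ Ω, λ₀ > 0 and δ > 0 such that (i) I is Lipschitz continuous on an open set containing the set C(δ,λ₀) = {x ∈ Ω_δ : Φ_{λ₀}(x) < I(x₀)}, and (ii) there exists a > 0 such that φ↓_A(x) ≤ −a for all x ∈ C(δ,λ₀) \ Ω. Then the penalty function Φ_λ is globally exact (i.e. there exists λ* ≥ 0 such that for all λ ≥ λ* the set of global minimizers of Φ_λ on A coincides with the set of global minimizers of I on Ω) if and only if there exists λ ≥ 0 such that Φ_λ is bounded below on A. -/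
open Filter Metric Set Topology
open scoped ENNReal NNReal

/-- The rate of steepest descent of `g : X → EReal` with respect to the set `K` at `x`:
`g↓_K(x) = liminf_{y→x, y∈K, y≠x} (g(y) − g(x))/d(y,x)` (equal to `+∞` at isolated points of `K`). -/
noncomputable def rateOfDescent {X : Type*} [MetricSpace X] (g : X → EReal) (K : Set X)
    (x : X) : EReal :=
  Filter.liminf (fun y => (g y - g x) * (((dist y x)⁻¹ : ℝ) : EReal)) (nhdsWithin x (K \ {x}))

lemma ekeland_aux {Y : Type*} [MetricSpace Y] [CompleteSpace Y] (f : Y → ℝ)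
    (hf : LowerSemicontinuous f) (b : ℝ) (hb : ∀ y, b ≤ f y) (x : Y) :
    ∃ y, ∀ z, f z + dist z y ≤ f y → z = y := by
  let T : Y → Set Y := fun y => {z | f z + dist z y ≤ f y}
  have hTc : ∀ y, IsClosed (T y) := by
    intro y
    have h1 : LowerSemicontinuous (fun z => f z + dist z y) :=
      hf.add (continuous_id.dist continuous_const).lowerSemicontinuous
    exact h1.isClosed_preimage (f y)
  have hself : ∀ y, y ∈ T y := fun y => by simp [T]
  have htrans : ∀ u v w, v ∈ T u → w ∈ T v → w ∈ T u := by
    intro u v w h1 h2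
    simp only [T, mem_setOf_eq] at *
    have := dist_triangle w v u
    linarith
  have hstep : ∀ (u : Y) (n : ℕ), ∃ v ∈ T u, ∀ z ∈ T u, f v ≤ f z + 1 / ((n : ℝ) + 1) := by
    intro u n
    have hpos : (0 : ℝ) < 1 / ((n : ℝ) + 1) := by positivity
    have hne : (f '' T u).Nonempty := ⟨f u, u, hself u, rfl⟩
    have hbd : BddBelow (f '' T u) := ⟨b, by rintro _ ⟨z, _, rfl⟩; exact hb z⟩
    obtain ⟨_, ⟨v, hv, rfl⟩, hlt⟩ := exists_lt_of_csInf_lt hne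
      (lt_add_of_pos_right (sInf (f '' T u)) hpos)
    refine ⟨v, hv, fun z hz => ?_⟩
    have := csInf_le hbd ⟨z, hz, rfl⟩
    linarith
  choose g hgT hg using hstep
  let u : ℕ → Y := fun n => Nat.rec x (fun n v => g v n) n
  have hu : ∀ n, u (n + 1) = g (u n) n := fun n => rfl
  have hmono : ∀ n m, n ≤ m → u m ∈ T (u n) := by
    intro n m h
    induction m, h using Nat.le_induction with
    | base => exact hself _
    | succ m _ ih =>
      refine htrans _ _ _ ih ?_
      rw [hu]; exact hgT _ _
  have hsmall : ∀ n z, z ∈ T (u (n + 1)) → dist z (u (n + 1)) ≤ 1 / ((n : ℝ) + 1) := by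
    intro n z hz
    have h1 : z ∈ T (u n) := htrans _ _ _ (hmono n (n + 1) (Nat.le_succ n)) hz
    have h2 := hg (u n) n z h1
    rw [← hu] at h2
    simp only [T, mem_setOf_eq] at hz
    linarith
  have h0 : Tendsto (fun n : ℕ => 1 / ((n : ℝ) + 1)) atTop (𝓝 0) :=
    tendsto_one_div_add_atTop_nhds_zero_nat
  have hc : CauchySeq (fun n => u (n + 1)) := by
    refine cauchySeq_of_le_tendsto_0' (fun n : ℕ => 1 / ((n : ℝ) + 1)) ?_ h0
    intro n m hnm
    rw [dist_comm]
    exact hsmall n _ (hmono (n + 1) (m + 1) (by omega))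
  obtain ⟨y, hy⟩ := cauchySeq_tendsto_of_complete hc
  have hyT : ∀ n, y ∈ T (u (n + 1)) := by
    intro n
    refine (hTc _).mem_of_tendsto hy ?_
    filter_upwards [eventually_ge_atTop n] with m hm
    exact hmono (n + 1) (m + 1) (by omega)
  refine ⟨y, fun z hz => ?_⟩
  have h3 : Tendsto (fun n => u (n + 1)) atTop (𝓝 z) := by
    rw [tendsto_iff_dist_tendsto_zero]
    refine squeeze_zero (fun _ => dist_nonneg) (fun n => ?_) h0
    rw [dist_comm]
    exact hsmall n z (htrans _ _ _ (hyT n) hz)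
  exact tendsto_nhds_unique h3 hy

lemma penalty_lsc {X : Type*} [MetricSpace X] (I : X → EReal) (hI : LowerSemicontinuous I)
    (hb : ∀ x, I x ≠ ⊥)
    (φ : X → ℝ≥0∞) (hφ : LowerSemicontinuous φ) (lam : ℝ) (hl : 0 ≤ lam) :
    LowerSemicontinuous (fun x => I x + (lam : EReal) * ((φ x : ℝ≥0∞) : EReal)) := by
  have h1 : LowerSemicontinuous (fun x => ((ENNReal.ofReal lam * φ x : ℝ≥0∞) : EReal)) := by
    have hc : Continuous (fun t : ℝ≥0∞ => ((ENNReal.ofReal lam * t : ℝ≥0∞) : EReal)) :=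
      continuous_coe_ennreal_ereal.comp (ENNReal.continuous_const_mul ENNReal.ofReal_ne_top)
    refine hc.comp_lowerSemicontinuous hφ ?_
    intro s t hst
    exact EReal.coe_ennreal_le_coe_ennreal_iff.2 (by gcongr)
  have h2 : (fun x => I x + (lam : EReal) * ((φ x : ℝ≥0∞) : EReal))
      = fun x => I x + ((ENNReal.ofReal lam * φ x : ℝ≥0∞) : EReal) := by
    funext x
    rw [EReal.coe_ennreal_mul, EReal.coe_ennreal_ofReal, max_eq_left hl]
  rw [h2]
  refine hI.add' h1 fun x => EReal.continuousAt_add (Or.inr (EReal.coe_ennreal_ne_bot _)) (Or.inl (hb x))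

/-- If `I x + lam φ x < ⊤` with `lam > 0`, both parts are real. -/
lemma penalty_real {i : EReal} (hi : i ≠ ⊥) {p : ℝ≥0∞} {lam : ℝ} (hl : 0 < lam)
    (h : i + (lam : EReal) * (p : EReal) ≠ ⊤) :
    ∃ (r : ℝ) (q : ℝ≥0), i = r ∧ p = q := by
  induction i using EReal.rec with
  | bot => exact absurd rfl hi
  | top =>
    exfalso; apply h
    apply EReal.top_add_of_ne_bot
    have : (0 : EReal) ≤ (lam : EReal) * (p : EReal) :=
      mul_nonneg (by exact_mod_cast hl.le) (EReal.coe_ennreal_nonneg p)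
    intro h'; rw [h'] at this; simp at this
  | coe r =>
    induction p using ENNReal.recTopCoe with
    | top =>
      exfalso; apply h
      rw [EReal.coe_ennreal_top, EReal.coe_mul_top_of_pos hl]; simp
    | coe q => exact ⟨r, q, rfl, rfl⟩

lemma descent_step {X : Type*} [MetricSpace X] (A : Set X) (φ : X → ℝ≥0∞) (y : X) (q : ℝ≥0)
    (hq : φ y = q) (a : ℝ) (ha : 0 < a) (V : Set X) (hV : V ∈ 𝓝 y)
    (h : rateOfDescent (fun y => ((φ y : ℝ≥0∞) : EReal)) A y ≤ ((-a : ℝ) : EReal)) :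
    ∃ z ∈ A, z ∈ V ∧ z ≠ y ∧ ∃ s : ℝ≥0, φ z = s ∧ (s : ℝ) - q ≤ -(a / 2) * dist z y := by
  unfold rateOfDescent at h
  have h1 : ((-a : ℝ) : EReal) < ((-(a / 2) : ℝ) : EReal) := by
    exact_mod_cast (by linarith : -a < -(a / 2))
  have h2 := frequently_lt_of_liminf_lt (by isBoundedDefault) (lt_of_le_of_lt h h1)
  have h3 : ∀ᶠ z in 𝓝[A \ {y}] y, z ∈ V ∧ z ∈ A \ {y} :=
    Filter.Eventually.and (mem_nhdsWithin_of_mem_nhds hV) self_mem_nhdsWithin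
  obtain ⟨z, hz, hzV, hzA, hzy⟩ := (h2.and_eventually h3).exists
  have hzy' : z ≠ y := hzy
  have hd : 0 < dist z y := dist_pos.2 hzy'
  refine ⟨z, hzA, hzV, hzy', ?_⟩
  beta_reduce at hz
  rw [hq] at hz
  generalize φ z = p at hz ⊢
  induction p using ENNReal.recTopCoe with
  | top =>
    exfalso
    have : ((q : ℝ≥0∞) : EReal) = ((q : ℝ) : EReal) := rfl
    rw [this, EReal.coe_ennreal_top, EReal.top_sub_coe, EReal.top_mul_coe_of_pos (inv_pos.2 hd)] at hz
    exact absurd hz (by simp)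
  | coe s =>
    refine ⟨s, rfl, ?_⟩
    have e1 : ((q : ℝ≥0∞) : EReal) = ((q : ℝ) : EReal) := rfl
    have e2 : ((s : ℝ≥0∞) : EReal) = ((s : ℝ) : EReal) := rfl
    rw [e1, e2, ← EReal.coe_sub, ← EReal.coe_mul, EReal.coe_lt_coe_iff, ← div_eq_mul_inv,
      div_lt_iff₀ hd] at hz
    exact hz.le

/-- Theorem 2.1 ("global exactness").  Under the stated assumptions, the penalty function
`Φ_λ = I + λφ` is globally exact (its global minimisers over `A` coincide with the global
minimisers of `I` over `Ω = M ∩ A` for all sufficiently large `λ`) if and only if `Φ_λ` is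
bounded below on `A` for some `λ ≥ 0`. -/
theorem exact_penalty_globally_exact_iff_bounded_below
    {X : Type*} [MetricSpace X] [CompleteSpace X]
    (M A : Set X) (hA : IsClosed A)
    (I : X → EReal) (hInotbot : ∀ x, I x ≠ ⊥)
    (φ : X → ℝ≥0∞) (hφM : ∀ x, φ x = 0 ↔ x ∈ M)
    (Φ : ℝ → X → EReal)
    (hΦdef : ∀ lam x, Φ lam x = I x + (lam : EReal) * ((φ x : ℝ≥0∞) : EReal))
    (hIlsc : LowerSemicontinuous I) (hφlsc : LowerSemicontinuous φ)
    -- the problem (P) has a globally optimal solution with finite optimal value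
    (xs : X) (hxs : xs ∈ M ∩ A) (hxsmin : ∀ y ∈ M ∩ A, I xs ≤ I y) (hxsfin : I xs ≠ ⊤)
    -- a feasible point x₀ and parameters λ₀ > 0, δ > 0
    (x₀ : X) (hx₀ : x₀ ∈ M ∩ A)
    (lam₀ δ : ℝ) (hlam₀ : 0 < lam₀) (hδ : 0 < δ)
    -- (i) `I` is Lipschitz continuous on an open set containing `C(δ, λ₀)`
    (hLip : ∃ (V : Set X) (L : ℝ≥0), IsOpen V ∧
      {x | x ∈ A ∧ φ x < ENNReal.ofReal δ ∧ Φ lam₀ x < I x₀} ⊆ V ∧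
      (∀ x ∈ V, I x ≠ ⊤) ∧ LipschitzOnWith L (fun x => (I x).toReal) V)
    -- (ii) the rate of steepest descent of `φ` w.r.t. `A` is ≤ −a < 0 on `C(δ, λ₀) \ Ω`
    (hdesc : ∃ a : ℝ, 0 < a ∧
      ∀ x ∈ {x | x ∈ A ∧ φ x < ENNReal.ofReal δ ∧ Φ lam₀ x < I x₀} \ (M ∩ A),
        rateOfDescent (fun y => ((φ y : ℝ≥0∞) : EReal)) A x ≤ ((-a : ℝ) : EReal)) :
    (∃ lamStar : ℝ, 0 ≤ lamStar ∧ ∀ lam : ℝ, lamStar ≤ lam →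
        {x | x ∈ A ∧ ∀ y ∈ A, Φ lam x ≤ Φ lam y}
          = {x | x ∈ M ∩ A ∧ ∀ y ∈ M ∩ A, I x ≤ I y}) ↔
      (∃ lam : ℝ, 0 ≤ lam ∧ ∃ b : ℝ, ∀ x ∈ A, ((b : ℝ) : EReal) ≤ Φ lam x) := by
  have hpen0 : ∀ lam x, x ∈ M → Φ lam x = I x := by
    intro lam x hx
    rw [hΦdef, (hφM x).2 hx]; simp
  obtain ⟨Is, hIs⟩ : ∃ r : ℝ, I xs = r :=
    ⟨(I xs).toReal, (EReal.coe_toReal hxsfin (hInotbot xs)).symm⟩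
  constructor
  · rintro ⟨ls, hls, h⟩
    refine ⟨ls, hls, Is, ?_⟩
    have h1 : xs ∈ {x | x ∈ A ∧ ∀ y ∈ A, Φ ls x ≤ Φ ls y} := by
      rw [h ls le_rfl]; exact ⟨hxs, hxsmin⟩
    intro x hx
    have := h1.2 x hx
    rwa [hpen0 _ _ hxs.1, hIs] at this
  rintro ⟨l1, hl1, b, hb⟩
  obtain ⟨V, L, hVo, hCV, hVfin, hVL⟩ := hLip
  obtain ⟨a, ha, hdesc⟩ := hdesc
  have hreal : ∀ (lam : ℝ) (x : X) (r : ℝ) (q : ℝ≥0), I x = r → φ x = q →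
      Φ lam x = ((r + lam * q : ℝ) : EReal) := by
    intro lam x r q h1 h2
    rw [hΦdef, h1, h2]; rfl
  -- choice of the threshold
  obtain ⟨lb, hlb0, hlb1, hlb2, hlb3⟩ : ∃ lb : ℝ, 0 < lb ∧ lam₀ ≤ lb ∧ 
      (Is - b) ≤ (lb - l1) * δ ∧ L + 1 ≤ lb * (a / 2) ∧ l1 ≤ lb := by
    refine ⟨lam₀ + l1 + |Is - b| / δ + (L + 1) / (a / 2), by positivity, ?_, ?_, ?_, ?_⟩
    · have : 0 ≤ |Is - b| / δ + (L + 1) / (a / 2) := by positivity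
      linarith
    · have e : |Is - b| / δ * δ = |Is - b| := by field_simp
      have : 0 ≤ (lam₀ + (L + 1) / (a / 2)) * δ := by positivity
      have := le_abs_self (Is - b)
      nlinarith
    · have e : (L + 1) / (a / 2) * (a / 2) = L + 1 := by field_simp
      have : 0 ≤ (lam₀ + l1 + |Is - b| / δ) * (a / 2) := by positivity
      nlinarith
    · have : 0 ≤ |Is - b| / δ + (L + 1) / (a / 2) := by positivity
      linarith
  obtain ⟨hlb3, hlb4⟩ := hlb3
  have key : ∀ lam, lb ≤ lam → ∀ x ∈ A, (Is : EReal) ≤ Φ lam x := by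
    intro lam hlam x hxA
    by_contra! hlt
    have hlpos : 0 < lam := by linarith
    let S : Set X := {y | y ∈ A ∧ Φ lam y ≤ Φ lam x}
    have hlsc : LowerSemicontinuous (Φ lam) := by
      have := penalty_lsc I hIlsc hInotbot φ hφlsc lam hlpos.le
      rwa [← funext (hΦdef lam)] at this
    have hSc : IsClosed S := hA.inter (hlsc.isClosed_preimage (Φ lam x))
    have hSreal : ∀ y ∈ S, ∃ (r : ℝ) (q : ℝ≥0), I y = r ∧ φ y = q := by
      intro y hy
      apply penalty_real (hInotbot y) hlpos
      rw [← hΦdef]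
      exact ((hy.2.trans_lt hlt).trans_le le_top).ne
    have hSb : ∀ y ∈ S, b ≤ (Φ lam y).toReal := by
      intro y hy
      obtain ⟨r, q, hr, hq⟩ := hSreal y hy
      have h1 := hb y hy.1
      rw [hreal _ _ r q hr hq, EReal.coe_le_coe_iff] at h1
      rw [hreal _ _ r q hr hq, EReal.toReal_coe]
      have : l1 * q ≤ lam * q := by gcongr; linarith
      linarith
    haveI : CompleteSpace S := hSc.completeSpace_coe
    have hf : LowerSemicontinuous (fun y : S => (Φ lam y).toReal) := by
      rw [lowerSemicontinuous_iff_isClosed_preimage]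
      intro c
      have h1 : IsClosed ((Subtype.val : S → X) ⁻¹' ((Φ lam) ⁻¹' Iic (c : EReal))) :=
        (hlsc.isClosed_preimage (c : EReal)).preimage continuous_subtype_val
      convert h1 using 1
      ext y
      obtain ⟨r, q, hr, hq⟩ := hSreal y y.2
      simp only [mem_preimage, mem_Iic]
      rw [hreal _ _ r q hr hq, EReal.toReal_coe, EReal.coe_le_coe_iff]
    obtain ⟨⟨y, hyS⟩, hy⟩ := ekeland_aux (fun y : S => (Φ lam y).toReal) hf b
      (fun y => hSb y y.2) ⟨x, hxA, le_rfl⟩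
    obtain ⟨r, q, hr, hq⟩ := hSreal y hyS
    have hylt : Φ lam y < Is := hyS.2.trans_lt hlt
    have hyR : r + lam * q < Is := by
      rw [hreal _ _ r q hr hq] at hylt
      exact_mod_cast hylt
    have hqδ : (q : ℝ) < δ := by
      by_contra! hge
      have h1 := hb y hyS.1
      rw [hreal _ _ r q hr hq, EReal.coe_le_coe_iff] at h1
      have h2 : (lb - l1) * δ ≤ (lam - l1) * q := by
        apply mul_le_mul <;> linarith
      nlinarith
    have hyC : y ∈ A ∧ φ y < ENNReal.ofReal δ ∧ Φ lam₀ y < I x₀ := by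
      refine ⟨hyS.1, ?_, ?_⟩
      · rw [hq, ENNReal.lt_ofReal_iff_toReal_lt ENNReal.coe_ne_top]
        exact hqδ
      · refine lt_of_lt_of_le ?_ (hxsmin x₀ hx₀)
        rw [hIs, hreal _ _ r q hr hq, EReal.coe_lt_coe_iff]
        have : lam₀ * q ≤ lam * q := by gcongr; linarith
        linarith
    have hyM : y ∉ M ∩ A := by
      intro h
      have h1 := hxsmin y h
      rw [← hpen0 lam y h.1, hIs] at h1
      exact absurd hylt (not_lt.2 h1)
    obtain ⟨z, hzA, hzV, hzy, s, hs, hsq⟩ := descent_step A φ y q hq a ha V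
      (hVo.mem_nhds (hCV hyC)) (hdesc y ⟨hyC, hyM⟩)
    obtain ⟨t, ht⟩ : ∃ t : ℝ, I z = t :=
      ⟨(I z).toReal, (EReal.coe_toReal (hVfin z hzV) (hInotbot z)).symm⟩
    have hd : 0 < dist z y := dist_pos.2 hzy
    have hLd : t - r ≤ L * dist z y := by
      have h1 := hVL.dist_le_mul z hzV y (hCV hyC)
      simp only [ht, hr, EReal.toReal_coe, Real.dist_eq] at h1
      exact (le_abs_self _).trans h1
    have hmain : t + lam * s + dist z y ≤ r + lam * q := by
      have h1 : lam * ((s : ℝ) - q) ≤ lam * (-(a / 2) * dist z y) := by gcongr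
      have h2 : (L + 1) * dist z y ≤ lam * (a / 2) * dist z y := by
        gcongr
        refine hlb3.trans ?_
        gcongr
      nlinarith
    have hzle : Φ lam z ≤ Φ lam y := by
      rw [hreal _ _ r q hr hq, hreal _ _ t s ht hs, EReal.coe_le_coe_iff]
      linarith
    have hzS : z ∈ S := ⟨hzA, hzle.trans hyS.2⟩
    have h1 := hy ⟨z, hzS⟩ (by
      simp only [hreal _ _ r q hr hq, hreal _ _ t s ht hs, EReal.toReal_coe, Subtype.dist_eq]
      exact hmain)
    exact hzy (congrArg Subtype.val h1)
  have key2 : ∀ lam, lb + 1 ≤ lam → ∀ x ∈ A, Φ lam x ≤ Is → x ∈ M := by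
    intro lam hlam x hxA hle
    obtain ⟨r, q, hr, hq⟩ : ∃ (r : ℝ) (q : ℝ≥0), I x = r ∧ φ x = q := by
      apply penalty_real (hInotbot x) (by linarith : 0 < lam)
      rw [← hΦdef]
      exact (hle.trans_lt (EReal.coe_lt_top _)).ne
    have h1 := key lb le_rfl x hxA
    rw [hreal _ _ r q hr hq, EReal.coe_le_coe_iff] at h1 hle
    have h2 : (lb + 1) * (q : ℝ) ≤ lam * q := by gcongr
    have h3 : (q : ℝ) ≤ 0 := by linarith
    have h4 : q = 0 := le_antisymm (by exact_mod_cast h3) zero_le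
    rw [← hφM, hq, h4]; rfl
  refine ⟨lb + 1, by linarith, fun lam hlam => ?_⟩
  ext x
  constructor
  · rintro ⟨hxA, hx⟩
    have h1 := hx xs hxs.2
    rw [hpen0 _ _ hxs.1] at h1
    have hxM := key2 lam hlam x hxA (hIs ▸ h1)
    rw [hpen0 _ _ hxM] at h1
    exact ⟨⟨hxM, hxA⟩, fun y hy => h1.trans (hxsmin y hy)⟩
  · rintro ⟨hx, hmin⟩
    refine ⟨hx.2, fun y hy => ?_⟩
    rw [hpen0 _ _ hx.1]
    refine (hmin xs hxs).trans ?_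
    rw [hIs]
    exact key lam (by linarith) y hy
end

section
/- Suppose X is complete, A is closed, I and φ are lower semicontinuous on A, φ is continuous at every point of Ω, and there exist c > I*, λ₀ > 0 and δ > 0 such that (i) I is Lipschitz continuous on an open set containing S_{λ₀}(c) ∩ Ω_δ, (ii) there exists a > 0 such that φ↓_A(x) ≤ −a for all x ∈ S_{λ₀}(c) ∩ (Ω_δ \ Ω), and (iii) Φ_{λ₀} is bounded below on A. Then there exists λ* ≥ 0 such that for every λ ≥ λ*: a point x* ∈ S_λ(c) is a local minimizer of Φ_λ on A if and only if x* is a local minimizer of I on Ω. -/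
open Filter Metric Set Topology
open scoped ENNReal NNReal

theorem aux_ekeland {X : Type*} [MetricSpace X] [CompleteSpace X] (A : Set X) (hA : IsClosed A)
    (φ : X → ℝ≥0∞) (hφ : LowerSemicontinuousOn φ A) (k : ℝ) (hk : 0 < k) (y : X) (hy : y ∈ A)
    (hyt : φ y ≠ ⊤) :
    ∃ z ∈ A, φ z + ENNReal.ofReal (k * dist z y) ≤ φ y ∧
      ∀ w ∈ A, φ w + ENNReal.ofReal (k * dist w z) ≤ φ z → w = z := by
  classical
  let T : X → Set X := fun z => {w | w ∈ A ∧ φ w + ENNReal.ofReal (k * dist w z) ≤ φ z}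
  have hTself : ∀ z ∈ A, z ∈ T z := fun z hz => ⟨hz, by simp⟩
  have hTtrans : ∀ z w v, w ∈ T z → v ∈ T w → v ∈ T z := by
    rintro z w v ⟨hw, hw2⟩ ⟨hv, hv2⟩
    refine ⟨hv, ?_⟩
    calc φ v + ENNReal.ofReal (k * dist v z)
        ≤ φ v + (ENNReal.ofReal (k * dist v w) + ENNReal.ofReal (k * dist w z)) := by
          gcongr
          rw [← ENNReal.ofReal_add (by positivity) (by positivity)]
          apply ENNReal.ofReal_le_ofReal
          nlinarith [dist_triangle v w z]
      _ = (φ v + ENNReal.ofReal (k * dist v w)) + ENNReal.ofReal (k * dist w z) := by ring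
      _ ≤ φ w + ENNReal.ofReal (k * dist w z) := by gcongr
      _ ≤ φ z := hw2
  have hTcl : ∀ z, IsClosed (T z) := by
    intro z
    have h1 : LowerSemicontinuousOn (fun w => φ w + ENNReal.ofReal (k * dist w z)) A := by
      apply hφ.add
      have hc : Continuous (fun w => ENNReal.ofReal (k * dist w z)) :=
        ENNReal.continuous_ofReal.comp (by fun_prop)
      exact hc.lowerSemicontinuous.lowerSemicontinuousOn A
    obtain ⟨v, hv, hv2⟩ := lowerSemicontinuousOn_iff_preimage_Iic.1 h1 (φ z)
    have : T z = A ∩ v := by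
      rw [← hv2]; rfl
    rw [this]
    exact hA.inter hv
  have hfin : ∀ z, φ z ≠ ⊤ → ∀ w ∈ T z, φ w ≠ ⊤ := fun z hz w hw =>
    ne_top_of_le_ne_top hz (le_trans le_self_add hw.2)
  -- choice of next point
  have hstep : ∀ (n : ℕ) (z : {z // z ∈ A ∧ φ z ≠ ⊤}), ∃ w : {z // z ∈ A ∧ φ z ≠ ⊤},
      w.1 ∈ T z.1 ∧ ∀ v ∈ T z.1, φ w.1 ≤ φ v + ENNReal.ofReal (1 / ((n : ℝ) + 1)) := by
    rintro n ⟨z, hz, hzt⟩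
    have hinf : (⨅ v ∈ T z, φ v) ≠ ⊤ :=
      ne_top_of_le_ne_top hzt (iInf₂_le z (hTself z hz))
    have hlt : (⨅ v ∈ T z, φ v) < (⨅ v ∈ T z, φ v) + ENNReal.ofReal (1 / ((n : ℝ) + 1)) := by
      apply ENNReal.lt_add_right hinf
      have : (0 : ℝ) < 1 / ((n : ℝ) + 1) := by positivity
      simpa using this
    obtain ⟨w, hw, hw2⟩ := by
      simpa only [iInf_lt_iff, exists_prop] using hlt
    refine ⟨⟨w, hw.1, hfin z hzt w hw⟩, hw, fun v hv => hw2.le.trans ?_⟩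
    gcongr
    exact iInf₂_le v hv
  choose F hF1 hF2 using hstep
  obtain ⟨u, hu0, huS⟩ : ∃ u : ℕ → {z // z ∈ A ∧ φ z ≠ ⊤},
      (u 0).1 = y ∧ ∀ n, u (n + 1) = F n (u n) :=
    ⟨fun n => Nat.rec ⟨y, hy, hyt⟩ (fun n z => F n z) n, rfl, fun n => rfl⟩
  have hmono : ∀ n m, n ≤ m → (u m).1 ∈ T (u n).1 := by
    intro n m hnm
    induction m, hnm using Nat.le_induction with
    | base => exact hTself _ (u n).2.1
    | succ m _ ih => exact hTtrans _ _ _ ih (by rw [huS]; exact hF1 m (u m))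
  have hdiam : ∀ n, ∀ v ∈ T (u (n + 1)).1, dist v (u (n + 1)).1 ≤ 1 / ((n : ℝ) + 1) / k := by
    intro n v hv
    have h1 : v ∈ T (u n).1 := hTtrans _ _ _ (hmono n (n + 1) (by omega)) hv
    have h2 := hF2 n (u n) v h1
    rw [← huS] at h2
    have h3 := hv.2.trans h2
    have h4 := (ENNReal.add_le_add_iff_left (hfin _ (u n).2.2 v h1)).1 h3
    rw [ENNReal.ofReal_le_ofReal_iff (by positivity)] at h4
    rw [le_div_iff₀ hk]
    linarith
  have hlim : Tendsto (fun n : ℕ => 1 / ((n : ℝ) + 1) / k) atTop (𝓝 0) := by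
    simpa using (tendsto_one_div_add_atTop_nhds_zero_nat (𝕜 := ℝ)).div_const k
  have hcauchy : CauchySeq (fun n => (u (n + 1)).1) := by
    refine cauchySeq_of_le_tendsto_0' (fun n : ℕ => 1 / ((n : ℝ) + 1) / k) ?_ hlim
    intro n m hnm
    rw [dist_comm]
    exact hdiam n _ (hmono _ _ (by omega))
  obtain ⟨z, hz⟩ := cauchySeq_tendsto_of_complete hcauchy
  have hzT : ∀ n, z ∈ T (u n).1 := by
    intro n
    refine (hTcl _).mem_of_tendsto hz ?_
    filter_upwards [eventually_ge_atTop n] with m hm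
    exact hmono _ _ (by omega)
  refine ⟨z, (hzT 0).1, hu0 ▸ (hzT 0).2, fun w hw hwz => ?_⟩
  have hwT : ∀ n, w ∈ T (u n).1 := fun n => hTtrans _ _ _ (hzT n) ⟨hw, hwz⟩
  have hw' : Tendsto (fun n => (u (n + 1)).1) atTop (𝓝 w) := by
    rw [tendsto_iff_dist_tendsto_zero]
    refine squeeze_zero (fun _ => dist_nonneg) (fun n => ?_) hlim
    rw [dist_comm]
    exact hdiam n w (hwT _)
  exact tendsto_nhds_unique hw' hz

theorem aux_descent {X : Type*} [MetricSpace X] (A : Set X) (φ : X → ℝ≥0∞) (z : X)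
    (hzt : φ z ≠ ⊤) (a k : ℝ) (hka : k < a)
    (h : rateOfDescent (fun y => ((φ y : ℝ≥0∞) : EReal)) A z ≤ ((-a : ℝ) : EReal)) :
    ∃ᶠ w in 𝓝[A \ {z}] z, w ∈ A ∧ w ≠ z ∧ φ w ≠ ⊤ ∧
      (φ w).toReal + k * dist w z ≤ (φ z).toReal := by
  have h1 : rateOfDescent (fun y => ((φ y : ℝ≥0∞) : EReal)) A z < ((-k : ℝ) : EReal) :=
    lt_of_le_of_lt h (by exact_mod_cast neg_lt_neg hka)
  have h2 := frequently_lt_of_liminf_lt (h := h1)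
  refine (h2.and_eventually self_mem_nhdsWithin).mono ?_
  rintro w ⟨hw, hwA, hwz⟩
  have hwz : w ≠ z := hwz
  beta_reduce at hw
  have hd : 0 < dist w z := dist_pos.2 hwz
  have hz' : ((φ z : ℝ≥0∞) : EReal) = (((φ z).toReal : ℝ) : EReal) := by
    rw [← EReal.toReal_coe_ennreal, EReal.coe_toReal] <;> simp [hzt]
  have hwt : φ w ≠ ⊤ := by
    intro ht
    rw [ht, hz', EReal.coe_ennreal_top, EReal.top_sub_coe,
      EReal.top_mul_coe_of_pos (inv_pos.2 hd)] at hw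
    exact not_top_lt hw
  have hw' : ((φ w : ℝ≥0∞) : EReal) = (((φ w).toReal : ℝ) : EReal) := by
    rw [← EReal.toReal_coe_ennreal, EReal.coe_toReal] <;> simp [hwt]
  rw [hz', hw'] at hw
  have hw2 : ((φ w).toReal - (φ z).toReal) * (dist w z)⁻¹ < -k := by exact_mod_cast hw
  rw [← div_eq_mul_inv, div_lt_iff₀ hd] at hw2
  exact ⟨hwA, hwz, hwt, by linarith⟩

/-- Main theorem, part 3: for all sufficiently large `λ`, a point `x* ∈ S_λ(c)` is a locally
optimal solution of the penalised problem iff it is a locally optimal solution of `(P)`. -/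
theorem exact_penalty_local_minimisers
    {X : Type*} [MetricSpace X] [CompleteSpace X]
    (M A : Set X) (hA : IsClosed A)
    (I : X → EReal) (hInotbot : ∀ x, I x ≠ ⊥)
    (φ : X → ℝ≥0∞) (hφM : ∀ x, φ x = 0 ↔ x ∈ M)
    (Φ : ℝ → X → EReal)
    (hΦdef : ∀ lam x, Φ lam x = I x + (lam : EReal) * ((φ x : ℝ≥0∞) : EReal))
    (hIlsc : LowerSemicontinuousOn I A) (hφlsc : LowerSemicontinuousOn φ A)
    (hφcont : ∀ x ∈ M ∩ A, ContinuousAt φ x)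
    -- the problem (P) has a globally optimal solution with finite optimal value
    (xs : X) (hxs : xs ∈ M ∩ A) (hxsmin : ∀ y ∈ M ∩ A, I xs ≤ I y) (hxsfin : I xs ≠ ⊤)
    (c lam₀ δ : ℝ) (hc : I xs < ((c : ℝ) : EReal)) (hlam₀ : 0 < lam₀) (hδ : 0 < δ)
    -- (i) `I` is Lipschitz continuous on an open set containing `S_{λ₀}(c) ∩ Ω_δ`
    (hLip : ∃ (V : Set X) (L : ℝ≥0), IsOpen V ∧
      {x | x ∈ A ∧ Φ lam₀ x < ((c : ℝ) : EReal) ∧ φ x < ENNReal.ofReal δ} ⊆ V ∧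
      (∀ x ∈ V, I x ≠ ⊤) ∧ LipschitzOnWith L (fun x => (I x).toReal) V)
    -- (ii) the rate of steepest descent of `φ` w.r.t. `A` is ≤ −a < 0 on `S_{λ₀}(c) ∩ (Ω_δ \ Ω)`
    (hdesc : ∃ a : ℝ, 0 < a ∧
      ∀ x ∈ {x | x ∈ A ∧ Φ lam₀ x < ((c : ℝ) : EReal) ∧ φ x < ENNReal.ofReal δ} \ (M ∩ A),
        rateOfDescent (fun y => ((φ y : ℝ≥0∞) : EReal)) A x ≤ ((-a : ℝ) : EReal))
    -- (iii) `Φ_{λ₀}` is bounded below on `A`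
    (hbdd : ∃ b : ℝ, ∀ x ∈ A, ((b : ℝ) : EReal) ≤ Φ lam₀ x) :
    ∃ lamStar : ℝ, 0 ≤ lamStar ∧ ∀ lam : ℝ, lamStar ≤ lam →
      ∀ x, x ∈ A → Φ lam x < ((c : ℝ) : EReal) →
        (IsLocalMinOn (Φ lam) A x ↔ (x ∈ M ∩ A ∧ IsLocalMinOn I (M ∩ A) x)) := by
  obtain ⟨V, L, hV, hSV, hVtop, hL⟩ := hLip
  obtain ⟨a, ha, hdesc⟩ := hdesc
  obtain ⟨b, hb⟩ := hbdd
  set p : X → ℝ := fun x => (φ x).toReal with hp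
  set i : X → ℝ := fun x => (I x).toReal with hi
  have hp0 : ∀ x, 0 ≤ p x := fun x => ENNReal.toReal_nonneg
  have hΦ : ∀ lam x, φ x ≠ ⊤ → I x ≠ ⊤ → Φ lam x = ((i x + lam * p x : ℝ) : EReal) := by
    intro lam x h1 h2
    have e1 : ((φ x : ℝ≥0∞) : EReal) = ((p x : ℝ) : EReal) := by
      show _ = (((φ x).toReal : ℝ) : EReal)
      rw [← EReal.toReal_coe_ennreal, EReal.coe_toReal] <;> simp [h1]
    have e2 : I x = ((i x : ℝ) : EReal) := (EReal.coe_toReal h2 (hInotbot x)).symm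
    rw [hΦdef, e1, e2]
    push_cast
    rfl
  have hΦM : ∀ lam, ∀ x ∈ M, Φ lam x = I x := by
    intro lam x hx
    rw [hΦdef, (hφM x).2 hx]; simp
  have hfinite : ∀ lam x, 0 < lam → Φ lam x < ((c : ℝ) : EReal) → φ x ≠ ⊤ ∧ I x ≠ ⊤ := by
    intro lam x hl h
    rw [hΦdef] at h
    constructor
    · intro ht
      rw [ht, EReal.coe_ennreal_top, EReal.coe_mul_top_of_pos hl,
        EReal.add_top_of_ne_bot (hInotbot x)] at h
      exact not_top_lt h
    · intro ht
      rw [ht, EReal.top_add_of_ne_bot] at h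
      · exact not_top_lt h
      · have : (0 : EReal) ≤ (lam : EReal) * ((φ x : ℝ≥0∞) : EReal) :=
          mul_nonneg (by exact_mod_cast hl.le) (EReal.coe_ennreal_nonneg _)
        exact ne_bot_of_le_ne_bot (by simp) this
  have hlip : ∀ x ∈ V, ∀ y ∈ V, i x ≤ i y + L * dist x y := fun x hx y hy => by
    have := hL.dist_le_mul x hx y hy
    rw [Real.dist_eq] at this
    linarith [le_abs_self (i x - i y)]
  have hp_lt : ∀ x, ∀ t : ℝ, 0 < t → φ x ≠ ⊤ → (φ x < ENNReal.ofReal t ↔ p x < t) := by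
    intro x t ht hx
    rw [ENNReal.lt_ofReal_iff_toReal_lt hx]
  refine ⟨lam₀ + |c - b| / δ + 2 * L / a + 1, by positivity, ?_⟩
  intro lam hlam x hxA hxc
  have hq1 : 0 ≤ |c - b| / δ := by positivity
  have hq2 : 0 ≤ 2 * (L : ℝ) / a := by positivity
  have hlampos : 0 < lam := by linarith
  have hlamL : (L : ℝ) < lam * (a / 2) := by
    have : 2 * (L : ℝ) / a < lam := by linarith
    rw [div_lt_iff₀ ha] at this
    linarith
  obtain ⟨hxφ, hxI⟩ := hfinite lam x hlampos hxc
  have hxc' : i x + lam * p x < c := by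
    rw [hΦ lam x hxφ hxI] at hxc; exact_mod_cast hxc
  have hxb : b ≤ i x + lam₀ * p x := by
    have := hb x hxA
    rw [hΦ lam₀ x hxφ hxI] at this; exact_mod_cast this
  have hxc0 : i x + lam₀ * p x < c := by nlinarith [hp0 x]
  have hxδ : p x < δ := by
    have h1 : |c - b| < (lam - lam₀) * δ := by
      rw [← div_lt_iff₀ hδ]; linarith
    have h2 : (lam - lam₀) * p x < (lam - lam₀) * δ := by
      linarith [le_abs_self (c - b)]
    exact lt_of_mul_lt_mul_left h2 (by linarith)
  have hmemS : ∀ y ∈ A, φ y ≠ ⊤ → I y ≠ ⊤ → i y + lam₀ * p y < c → p y < δ →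
      y ∈ {x | x ∈ A ∧ Φ lam₀ x < ((c : ℝ) : EReal) ∧ φ x < ENNReal.ofReal δ} := by
    intro y hy h1 h2 h3 h4
    refine ⟨hy, ?_, (hp_lt y δ hδ h1).2 h4⟩
    rw [hΦ _ y h1 h2]; exact_mod_cast h3
  have hxS := hmemS x hxA hxφ hxI hxc0 hxδ
  have hxV : x ∈ V := hSV hxS
  have hVn : V ∈ 𝓝 x := hV.mem_nhds hxV
  constructor
  · intro hmin
    have hxM : x ∈ M := by
      by_contra hxM
      have hd := aux_descent A φ x hxφ a (a / 2) (by linarith)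
        (hdesc x ⟨hxS, fun h => hxM h.1⟩)
      have hev : ∀ᶠ w in 𝓝[A \ {x}] x, Φ lam x ≤ Φ lam w :=
        nhdsWithin_mono x diff_subset hmin
      have hev2 : ∀ᶠ w in 𝓝[A \ {x}] x, w ∈ V := mem_nhdsWithin_of_mem_nhds hVn
      obtain ⟨w, ⟨hwA, hwx, hwt, hw⟩, hw1, hw2⟩ := (hd.and_eventually (hev.and hev2)).exists
      rw [hΦ lam x hxφ hxI, hΦ lam w hwt (hVtop w hw2)] at hw1
      have hw1 : i x + lam * p x ≤ i w + lam * p w := by exact_mod_cast hw1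
      have h3 := hlip w hw2 x hxV
      have hdpos : 0 < dist w x := dist_pos.2 hwx
      have hw : p w + a / 2 * dist w x ≤ p x := hw
      nlinarith [mul_le_mul_of_nonneg_left hw hlampos.le, mul_lt_mul_of_pos_right hlamL hdpos]
    refine ⟨⟨hxM, hxA⟩, ?_⟩
    have h1 : ∀ᶠ w in 𝓝[M ∩ A] x, Φ lam x ≤ Φ lam w :=
      nhdsWithin_mono x inter_subset_right hmin
    show ∀ᶠ w in 𝓝[M ∩ A] x, I x ≤ I w
    filter_upwards [h1, self_mem_nhdsWithin] with w hw hwM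
    rwa [hΦM lam x hxM, hΦM lam w hwM.1] at hw
  · rintro ⟨⟨hxM, -⟩, hmin⟩
    have hφx : φ x = 0 := (hφM x).2 hxM
    have hpx : p x = 0 := by simp [hp, hφx]
    have hφc := hφcont x ⟨hxM, hxA⟩
    have hpc : ContinuousAt p x := (ENNReal.continuousAt_toReal hxφ).comp hφc
    have hic : ContinuousAt i x := hL.continuousOn.continuousAt hVn
    have hsmall : ∀ t : ℝ, 0 < t → ∀ᶠ y in 𝓝 x, φ y < ENNReal.ofReal t := by
      intro t ht
      apply hφc.eventually_lt_const
      rw [hφx]; simpa using ht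
    have hcev : ∀ᶠ y in 𝓝 x, i y + lam₀ * p y < c :=
      (hic.add (hpc.const_mul lam₀)).eventually_lt_const hxc0
    have hminev : ∀ᶠ y in 𝓝 x, y ∈ M ∩ A → I x ≤ I y := eventually_nhdsWithin_iff.1 hmin
    have hVev : ∀ᶠ y in 𝓝 x, y ∈ V := hVn
    obtain ⟨r, hr, hball⟩ := Metric.eventually_nhds_iff_ball.1
      ((hsmall δ hδ).and (hcev.and (hminev.and hVev)))
    show ∀ᶠ y in 𝓝[A] x, Φ lam x ≤ Φ lam y
    have hk : 0 < a / 2 := by positivity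
    filter_upwards [self_mem_nhdsWithin,
      mem_nhdsWithin_of_mem_nhds (Metric.ball_mem_nhds x (half_pos hr)),
      mem_nhdsWithin_of_mem_nhds (hsmall (a / 2 * (r / 2)) (by positivity))] with y hyA hyr hyφ
    have hyφ : φ y < ENNReal.ofReal (a / 2 * (r / 2)) := hyφ
    have hyt : φ y ≠ ⊤ := ne_top_of_lt hyφ
    obtain ⟨-, -, -, hyV⟩ := hball y (Metric.ball_subset_ball (by linarith) hyr)
    obtain ⟨z, hzA, hz1, hz2⟩ := aux_ekeland A hA φ hφlsc (a / 2) hk y hyA hyt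
    have hzt : φ z ≠ ⊤ := ne_top_of_le_ne_top hyt (le_trans le_self_add hz1)
    have hconv : ∀ u v : X, φ u ≠ ⊤ → φ v ≠ ⊤ →
        (φ u + ENNReal.ofReal (a / 2 * dist u v) ≤ φ v ↔ p u + a / 2 * dist u v ≤ p v) := by
      intro u v hu hv
      rw [← ENNReal.toReal_le_toReal (by simp [hu]) hv, ENNReal.toReal_add hu (by simp),
        ENNReal.toReal_ofReal (by positivity)]
    have hz1' := (hconv z y hzt hyt).1 hz1
    have hpy : p y < a / 2 * (r / 2) := (hp_lt y _ (by positivity) hyt).1 hyφ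
    have hzy : dist z y < r / 2 := by
      have : a / 2 * dist z y < a / 2 * (r / 2) := by linarith [hp0 z]
      exact lt_of_mul_lt_mul_left this hk.le
    have hzr : z ∈ Metric.ball x r := by
      rw [Metric.mem_ball] at hyr ⊢
      linarith [dist_triangle z y x]
    obtain ⟨hzδ, hzc, hzmin, hzV⟩ := hball z hzr
    have hzM : z ∈ M := by
      by_contra hzM
      have hzS := hmemS z hzA hzt (hVtop z hzV) hzc ((hp_lt z δ hδ hzt).1 hzδ)
      obtain ⟨w, hwA, hwz, hwt, hw⟩ := (aux_descent A φ z hzt a (a / 2) (by linarith)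
        (hdesc z ⟨hzS, fun h => hzM h.1⟩)).exists
      exact hwz (hz2 w hwA ((hconv w z hwt hzt).2 hw))
    have hIz := hzmin ⟨hzM, hzA⟩
    have hIz' : i x ≤ i z := EReal.toReal_le_toReal hIz (hInotbot x) (hVtop z hzV)
    have hpz : p z = 0 := by simp [hp, (hφM z).2 hzM]
    rw [hΦ lam x hxφ hxI, hΦ lam y hyt (hVtop y hyV)]
    have h3 := hlip z hzV y hyV
    have : i x + lam * p x ≤ i y + lam * p y := by
      rw [hpx]
      rw [hpz] at hz1'
      nlinarith [mul_le_mul_of_nonneg_left hz1' hlampos.le,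
        mul_le_mul_of_nonneg_right hlamL.le (dist_nonneg (x := z) (y := y))]
    exact_mod_cast this
end

section
/- Suppose X is complete, A is closed, I and φ are lower semicontinuous on A, φ is continuous at every point of Ω, and there exist c > I*, λ₀ > 0 and δ > 0 such that (i) I is Lipschitz continuous on an open set containing S_{λ₀}(c) ∩ Ω_δ, (ii) there exists a > 0 such that φ↓_A(x) ≤ −a for all x ∈ S_{λ₀}(c) ∩ (Ω_δ \ Ω), and (iii) Φ_{λ₀} is bounded below on A. Then there exists λ* ≥ 0 such that for every λ ≥ λ*: a point x* ∈ S_λ(c) is an inf-stationary point of Φ_λ on A if and only if x* ∈ Ω and x* is an inf-stationary point of I on Ω. -/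
open Filter Metric Set Topology
open scoped ENNReal NNReal

theorem ekeland_aux_s3 {X : Type*} [MetricSpace X] [CompleteSpace X] (A : Set X) (hA : IsClosed A)
    (φ : X → ℝ≥0∞) (hφ : LowerSemicontinuousOn φ A) (k : ℝ≥0) (hk : 0 < k)
    (y : X) (hy : y ∈ A) (hyt : φ y ≠ ⊤) :
    ∃ z ∈ A, φ z + k * edist z y ≤ φ y ∧ ∀ w ∈ A, φ w + k * edist w z ≤ φ z → w = z := by
  have trans : ∀ u v w : X, φ v + k * edist v u ≤ φ u → φ w + k * edist w v ≤ φ v →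
      φ w + k * edist w u ≤ φ u := by
    intro u v w h1 h2
    calc φ w + k * edist w u ≤ φ w + k * (edist w v + edist v u) := by
          gcongr; exact edist_triangle _ _ _
      _ = (φ w + k * edist w v) + k * edist v u := by ring
      _ ≤ φ v + k * edist v u := by gcongr
      _ ≤ φ u := h1
  have step : ∀ (n : ℕ) (u : {u : X // u ∈ A ∧ φ u ≠ ⊤}), ∃ v : {u : X // u ∈ A ∧ φ u ≠ ⊤},
      φ v + k * edist (v : X) u ≤ φ u ∧
      ∀ w ∈ A, φ w + k * edist w u ≤ φ u → φ v ≤ φ w + (1 / 2 ^ n : ℝ≥0∞) := by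
    rintro n ⟨u, huA, hut⟩
    set S : Set X := {w | w ∈ A ∧ φ w + k * edist w u ≤ φ u} with hS
    have huS : u ∈ S := ⟨huA, by simp⟩
    have hfin : (⨅ w ∈ S, φ w) ≠ ⊤ := ne_top_of_le_ne_top hut (iInf₂_le u huS)
    have hlt : (⨅ w ∈ S, φ w) < (⨅ w ∈ S, φ w) + (1 / 2 ^ n : ℝ≥0∞) :=
      ENNReal.lt_add_right hfin (by simp)
    obtain ⟨v, hv⟩ := iInf_lt_iff.1 hlt
    obtain ⟨hvS, hv⟩ := iInf_lt_iff.1 hv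
    refine ⟨⟨v, hvS.1, ne_top_of_le_ne_top hut (le_trans le_self_add hvS.2)⟩, hvS.2, ?_⟩
    intro w hw hwu
    refine hv.le.trans ?_
    gcongr
    exact iInf₂_le w (⟨hw, hwu⟩ : w ∈ S)
  choose f hf1 hf2 using step
  let u : ℕ → {u : X // u ∈ A ∧ φ u ≠ ⊤} := fun n => Nat.rec ⟨y, hy, hyt⟩ (fun n v => f n v) n
  have hus : ∀ n, u (n + 1) = f n (u n) := fun n => rfl
  have h1 : ∀ n : ℕ, φ (u (n + 1)).1 + k * edist (u (n + 1)).1 (u n).1 ≤ φ (u n).1 := by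
    intro n; simp only [hus]; exact hf1 n (u n)
  have hmono : ∀ n m : ℕ, φ (u (n + m)).1 + k * edist (u (n + m)).1 (u n).1 ≤ φ (u n).1 := by
    intro n m
    induction m with
    | zero => simp
    | succ m ih => exact trans _ _ _ ih (h1 (n + m))
  have h2 : ∀ n : ℕ, ∀ w ∈ A, φ w + k * edist w (u (n + 1)).1 ≤ φ (u (n + 1)).1 →
      edist w (u (n + 1)).1 ≤ (k : ℝ≥0∞)⁻¹ / 2 ^ n := by
    intro n w hw hwu
    have h3 : φ (u (n + 1)).1 ≤ φ w + (1 / 2 ^ n : ℝ≥0∞) := by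
      simp only [hus]
      refine hf2 n (u n) w hw (trans _ _ _ (h1 n) hwu)
    have hwt : φ w ≠ ⊤ := ne_top_of_le_ne_top (u (n + 1)).2.2 (le_trans le_self_add hwu)
    have h4 : (k : ℝ≥0∞) * edist w (u (n + 1)).1 ≤ 1 / 2 ^ n :=
      (ENNReal.add_le_add_iff_left hwt).1 (hwu.trans h3)
    have hk0 : (k : ℝ≥0∞) ≠ 0 := by exact_mod_cast hk.ne'
    calc edist w (u (n + 1)).1 = (k : ℝ≥0∞)⁻¹ * (k * edist w (u (n + 1)).1) := by
          rw [← mul_assoc, ENNReal.inv_mul_cancel hk0 ENNReal.coe_ne_top, one_mul]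
      _ ≤ (k : ℝ≥0∞)⁻¹ * (1 / 2 ^ n) := by gcongr
      _ = _ := by rw [mul_one_div]
  have hkinv : (k : ℝ≥0∞)⁻¹ ≠ ⊤ := by simpa using hk.ne'
  have hC : CauchySeq (fun n => (u (n + 1) : X)) := by
    refine cauchySeq_of_edist_le_geometric_two (k : ℝ≥0∞)⁻¹ hkinv ?_
    intro n
    rw [edist_comm]
    exact h2 n _ (u (n + 2)).2.1 (h1 (n + 1))
  obtain ⟨z, hz⟩ := cauchySeq_tendsto_of_complete hC
  have hz' : Tendsto (fun n : ℕ => (u n).1) atTop (𝓝 z) := 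
    (tendsto_add_atTop_iff_nat (f := fun n => (u n).1) 1).1 hz
  have hzA : z ∈ A := hA.mem_of_tendsto hz' (Eventually.of_forall fun n => (u n).2.1)
  have hzS : ∀ n : ℕ, φ z + k * edist z (u n).1 ≤ φ (u n).1 := by
    intro n
    have hl : LowerSemicontinuousOn (fun w => φ w + k * edist w (u n).1) A := by
      refine hφ.add ((Continuous.lowerSemicontinuous ?_).lowerSemicontinuousOn A)
      exact (ENNReal.continuous_const_mul ENNReal.coe_ne_top).comp
        (continuous_id.edist continuous_const)
    obtain ⟨v, hv, hAv⟩ := lowerSemicontinuousOn_iff_preimage_Iic.1 hl (φ (u n).1)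
    have : z ∈ A ∩ v := by
      refine (hA.inter hv).mem_of_tendsto hz' ?_
      filter_upwards [eventually_ge_atTop n] with m hm
      obtain ⟨j, rfl⟩ := Nat.exists_eq_add_of_le hm
      rw [← hAv]
      exact ⟨(u _).2.1, hmono n j⟩
    rw [← hAv] at this
    exact this.2
  refine ⟨z, hzA, hzS 0, ?_⟩
  intro w hw hwz
  have hlim : Tendsto (fun n => (u (n + 1) : X)) atTop (𝓝 w) := by
    rw [tendsto_iff_edist_tendsto_0]
    have h0 : Tendsto (fun n : ℕ => (k : ℝ≥0∞)⁻¹ / 2 ^ n) atTop (𝓝 0) := by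
      have := ENNReal.Tendsto.const_mul (a := (k : ℝ≥0∞)⁻¹)
        (ENNReal.tendsto_pow_atTop_nhds_zero_of_lt_one (r := 2⁻¹) (by simp)) (Or.inr hkinv)
      simpa [div_eq_mul_inv, ENNReal.inv_pow] using this
    refine tendsto_of_tendsto_of_tendsto_of_le_of_le tendsto_const_nhds h0 (fun _ => zero_le) ?_
    intro n
    show edist (u (n + 1) : X) w ≤ _
    rw [edist_comm]
    exact h2 n w hw (trans _ _ _ (hzS (n + 1)) hwz)
  exact tendsto_nhds_unique hlim hz

theorem quot_aux (u : EReal) (hu : u ≠ ⊥) (r t d : ℝ) (hd : 0 < d) :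
    ((t : EReal) < (u - (r : EReal)) * ((d⁻¹ : ℝ) : EReal)) ↔ ((r + t * d : ℝ) : EReal) < u := by
  induction u with
  | bot => exact absurd rfl hu
  | top =>
    rw [EReal.top_sub_coe, EReal.top_mul_coe_of_pos (inv_pos.2 hd)]
    simp only [EReal.coe_lt_top]
  | coe u =>
    rw [← EReal.coe_sub, ← EReal.coe_mul, EReal.coe_lt_coe_iff, EReal.coe_lt_coe_iff,
      ← div_eq_mul_inv, lt_div_iff₀ hd]
    constructor <;> intro h <;> linarith

theorem rate_nonneg_iff {X : Type*} [MetricSpace X] (g : X → EReal) (hg : ∀ x, g x ≠ ⊥)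
    (K : Set X) (x : X) (r s : ℝ) (hr : g x = r) :
    (s : EReal) ≤ rateOfDescent g K x ↔ ∀ t < s, ∀ᶠ y in 𝓝[K \ {x}] x,
      ((r + t * dist y x : ℝ) : EReal) < g y := by
  have key : ∀ t : ℝ, (∀ᶠ y in 𝓝[K \ {x}] x,
      (t : EReal) < (g y - g x) * (((dist y x)⁻¹ : ℝ) : EReal)) ↔
      ∀ᶠ y in 𝓝[K \ {x}] x, ((r + t * dist y x : ℝ) : EReal) < g y := by
    intro t
    refine eventually_congr ?_
    filter_upwards [self_mem_nhdsWithin] with y hy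
    rw [hr]
    exact quot_aux _ (hg y) _ _ _ (dist_pos.2 hy.2)
  unfold rateOfDescent
  rw [le_liminf_iff]
  constructor
  · intro h t ht
    exact (key t).1 (h t (by exact_mod_cast ht))
  · intro h q hq
    obtain ⟨t, hqt, hts⟩ := EReal.lt_iff_exists_real_btwn.1 hq
    filter_upwards [(key t).2 (h t (by exact_mod_cast hts))] with y hy
    exact hqt.trans hy

/-- Main theorem, part 4: for all sufficiently large `λ`, a point `x* ∈ S_λ(c)` is an
inf-stationary point of `Φ_λ` on `A` iff `x* ∈ Ω` and it is an inf-stationary point of `I`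
on `Ω`. -/
theorem exact_penalty_inf_stationary_points
    {X : Type*} [MetricSpace X] [CompleteSpace X]
    (M A : Set X) (hA : IsClosed A)
    (I : X → EReal) (hInotbot : ∀ x, I x ≠ ⊥)
    (φ : X → ℝ≥0∞) (hφM : ∀ x, φ x = 0 ↔ x ∈ M)
    (Φ : ℝ → X → EReal)
    (hΦdef : ∀ lam x, Φ lam x = I x + (lam : EReal) * ((φ x : ℝ≥0∞) : EReal))
    (hIlsc : LowerSemicontinuousOn I A) (hφlsc : LowerSemicontinuousOn φ A)
    (hφcont : ∀ x ∈ M ∩ A, ContinuousAt φ x)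
    -- the problem (P) has a globally optimal solution with finite optimal value
    (xs : X) (hxs : xs ∈ M ∩ A) (hxsmin : ∀ y ∈ M ∩ A, I xs ≤ I y) (hxsfin : I xs ≠ ⊤)
    (c lam₀ δ : ℝ) (hc : I xs < ((c : ℝ) : EReal)) (hlam₀ : 0 < lam₀) (hδ : 0 < δ)
    -- (i) `I` is Lipschitz continuous on an open set containing `S_{λ₀}(c) ∩ Ω_δ`
    (hLip : ∃ (V : Set X) (L : ℝ≥0), IsOpen V ∧
      {x | x ∈ A ∧ Φ lam₀ x < ((c : ℝ) : EReal) ∧ φ x < ENNReal.ofReal δ} ⊆ V ∧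
      (∀ x ∈ V, I x ≠ ⊤) ∧ LipschitzOnWith L (fun x => (I x).toReal) V)
    -- (ii) the rate of steepest descent of `φ` w.r.t. `A` is ≤ −a < 0 on `S_{λ₀}(c) ∩ (Ω_δ \ Ω)`
    (hdesc : ∃ a : ℝ, 0 < a ∧
      ∀ x ∈ {x | x ∈ A ∧ Φ lam₀ x < ((c : ℝ) : EReal) ∧ φ x < ENNReal.ofReal δ} \ (M ∩ A),
        rateOfDescent (fun y => ((φ y : ℝ≥0∞) : EReal)) A x ≤ ((-a : ℝ) : EReal))
    -- (iii) `Φ_{λ₀}` is bounded below on `A`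
    (hbdd : ∃ b : ℝ, ∀ x ∈ A, ((b : ℝ) : EReal) ≤ Φ lam₀ x) :
    ∃ lamStar : ℝ, 0 ≤ lamStar ∧ ∀ lam : ℝ, lamStar ≤ lam →
      ∀ x, x ∈ A → Φ lam x < ((c : ℝ) : EReal) →
        ((0 : EReal) ≤ rateOfDescent (Φ lam) A x ↔
          (x ∈ M ∩ A ∧ (0 : EReal) ≤ rateOfDescent I (M ∩ A) x)) := by
  have hΦreal : ∀ (lam : ℝ) (y : X) (r : ℝ), I y = r → φ y ≠ ⊤ →
      Φ lam y = ((r + lam * (φ y).toReal : ℝ) : EReal) := by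
    intro lam y r hr hp
    rw [hΦdef, hr, ← EReal.coe_ennreal_toReal hp]
    push_cast
    rfl
  have hΦbot : ∀ lam : ℝ, 0 ≤ lam → ∀ y, Φ lam y ≠ ⊥ := by
    intro lam hl y
    rw [hΦdef]
    have h0 : (0 : EReal) ≤ (lam : EReal) * ((φ y : ℝ≥0∞) : EReal) :=
      mul_nonneg (by exact_mod_cast hl) (EReal.coe_ennreal_nonneg _)
    exact EReal.add_ne_bot_iff.2 ⟨hInotbot y, fun h => by simp [h] at h0⟩
  have hIreal : ∀ y, I y ≠ ⊤ → I y = (((I y).toReal : ℝ) : EReal) := by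
    intro y hy
    exact (EReal.coe_toReal hy (hInotbot y)).symm
  have hΦtop : ∀ lam : ℝ, 0 < lam → ∀ y, φ y = ⊤ → Φ lam y = ⊤ := by
    intro lam hl y hy
    rw [hΦdef, hy, EReal.coe_ennreal_top, EReal.coe_mul_top_of_pos hl]
    exact EReal.add_top_of_ne_bot (hInotbot y)
  have hItop : ∀ lam : ℝ, 0 ≤ lam → ∀ y, I y = ⊤ → Φ lam y = ⊤ := by
    intro lam hl y hy
    rw [hΦdef, hy]
    have h0 : (0 : EReal) ≤ (lam : EReal) * ((φ y : ℝ≥0∞) : EReal) :=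
      mul_nonneg (by exact_mod_cast hl) (EReal.coe_ennreal_nonneg _)
    exact EReal.top_add_of_ne_bot (fun h => by simp [h] at h0)
  have hφbot : ∀ y, ((φ y : ℝ≥0∞) : EReal) ≠ ⊥ := fun y => EReal.coe_ennreal_ne_bot _
  obtain ⟨V, L, hVo, hSV, hVtop, hL⟩ := hLip
  obtain ⟨a, ha, hdesc⟩ := hdesc
  obtain ⟨b, hb⟩ := hbdd
  have hLip : ∀ y ∈ V, ∀ z ∈ V, (I y).toReal ≤ (I z).toReal + L * dist y z := by
    intro y hy z hz
    have := hL.dist_le_mul y hy z hz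
    rw [Real.dist_eq] at this
    linarith [le_abs_self ((I y).toReal - (I z).toReal)]
  -- in terms of reals
  have hdesc' : ∀ y ∈ A, y ∉ M → Φ lam₀ y < (c : EReal) → φ y < ENNReal.ofReal δ →
      ∃ᶠ z in 𝓝[A \ {y}] y, φ z ≠ ⊤ ∧ (φ z).toReal ≤ (φ y).toReal - a / 2 * dist z y := by
    intro y hyA hyM hyc hyδ
    have hyt : φ y ≠ ⊤ := hyδ.ne_top
    have h1 := hdesc y ⟨⟨hyA, hyc, hyδ⟩, fun h => hyM h.1⟩
    have h2 : ¬ (((-(3 * a / 4) : ℝ) : EReal) ≤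
        rateOfDescent (fun y => ((φ y : ℝ≥0∞) : EReal)) A y) := by
      intro h3
      have := h3.trans h1
      rw [EReal.coe_le_coe_iff] at this
      linarith
    rw [rate_nonneg_iff (fun y => ((φ y : ℝ≥0∞) : EReal)) hφbot A y (φ y).toReal _
      (EReal.coe_ennreal_toReal hyt).symm] at h2
    push Not at h2
    obtain ⟨t, ht, h2⟩ := h2
    refine h2.mono ?_
    intro z hz
    have hzt : φ z ≠ ⊤ := by
      intro h
      rw [h, EReal.coe_ennreal_top] at hz
      exact absurd hz (not_le.2 (EReal.coe_lt_top _))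
    refine ⟨hzt, ?_⟩
    rw [← EReal.coe_ennreal_toReal hzt, EReal.coe_le_coe_iff] at hz
    have hd : 0 ≤ dist z y := dist_nonneg
    nlinarith
  refine ⟨lam₀ + |c - b| / δ + (L + 1) / (a / 2) + 1, by positivity, ?_⟩
  intro lam hlam x hxA hxc
  have hL0 : (0 : ℝ) ≤ L := L.2
  have e1 : 0 ≤ |c - b| / δ := by positivity
  have e2 : 0 ≤ (L + 1) / (a / 2) := by positivity
  have hlk : (L : ℝ) + 1 ≤ lam * (a / 2) := by
    have : (L + 1) / (a / 2) ≤ lam := by linarith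
    rwa [div_le_iff₀ (by positivity)] at this
  have hlpos : 0 < lam := by linarith
  have hxI : I x ≠ ⊤ := fun h => by
    rw [hItop lam hlpos.le x h] at hxc; exact absurd hxc not_top_lt
  have hxφ : φ x ≠ ⊤ := fun h => by
    rw [hΦtop lam hlpos x h] at hxc; exact absurd hxc not_top_lt
  have hxr := hIreal x hxI
  set r := (I x).toReal with hr
  have hΦx : ∀ l : ℝ, Φ l x = ((r + l * (φ x).toReal : ℝ) : EReal) :=
    fun l => hΦreal l x r hxr hxφ
  have hp0 : 0 ≤ (φ x).toReal := ENNReal.toReal_nonneg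
  have hxc' : r + lam * (φ x).toReal < c := by
    rw [hΦx] at hxc; exact_mod_cast hxc
  have hxb : b ≤ r + lam₀ * (φ x).toReal := by
    have := hb x hxA
    rw [hΦx] at this; exact_mod_cast this
  have hxc0 : Φ lam₀ x < (c : EReal) := by
    rw [hΦx, EReal.coe_lt_coe_iff]
    nlinarith
  have hxδ : φ x < ENNReal.ofReal δ := by
    rw [ENNReal.lt_ofReal_iff_toReal_lt hxφ]
    by_contra hcon
    push Not at hcon
    have h1 : |c - b| ≤ (lam - lam₀) * δ := by
      have : |c - b| / δ ≤ lam - lam₀ := by linarith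
      rwa [div_le_iff₀ hδ] at this
    have h2 : (lam - lam₀) * δ ≤ (lam - lam₀) * (φ x).toReal :=
      mul_le_mul_of_nonneg_left hcon (by linarith)
    linarith [le_abs_self (c - b)]
  have hxV : x ∈ V := hSV ⟨hxA, hxc0, hxδ⟩
  have hstatΦ := rate_nonneg_iff (Φ lam) (hΦbot lam hlpos.le) A x _ 0 (hΦx lam)
  have hstatI := rate_nonneg_iff I hInotbot (M ∩ A) x r 0 hxr
  rw [EReal.coe_zero] at hstatΦ hstatI
  rw [hstatΦ, hstatI]
  constructor
  · intro h
    have hxM : x ∈ M := by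
      by_contra hxM
      have h1 := h (-1) (by norm_num)
      have h2 := hdesc' x hxA hxM hxc0 hxδ
      have hV : ∀ᶠ y in 𝓝[A \ {x}] x, y ∈ V :=
        mem_nhdsWithin_of_mem_nhds (hVo.mem_nhds hxV)
      obtain ⟨y, ⟨hyt, hy⟩, h1, hyV⟩ := (h2.and_eventually (h1.and hV)).exists
      rw [hΦreal lam y _ (hIreal y (hVtop y hyV)) hyt, EReal.coe_lt_coe_iff] at h1
      have h3 := hLip y hyV x hxV
      have hd : 0 ≤ dist y x := dist_nonneg
      have h4 : lam * (φ y).toReal ≤ lam * ((φ x).toReal - a / 2 * dist y x) :=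
        mul_le_mul_of_nonneg_left hy hlpos.le
      have h5 : (L + 1) * dist y x ≤ lam * (a / 2) * dist y x :=
        mul_le_mul_of_nonneg_right hlk hd
      linarith
    refine ⟨⟨hxM, hxA⟩, ?_⟩
    intro t ht
    have hsub : (M ∩ A) \ {x} ⊆ A \ {x} := fun y hy => ⟨hy.1.2, hy.2⟩
    have h1 := (h t ht).filter_mono (nhdsWithin_mono x hsub)
    filter_upwards [h1, self_mem_nhdsWithin] with y hy hyM
    rw [hΦdef, (hφM y).2 hyM.1.1, (hφM x).2 hxM] at hy
    simpa using hy
  · rintro ⟨⟨hxM, -⟩, h⟩ t ht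
    have hx0 : φ x = 0 := (hφM x).2 hxM
    have hrc : r < c := by simpa [hx0] using hxc'
    simp only [hx0, ENNReal.toReal_zero, mul_zero, add_zero]
    obtain ⟨ε, hε0, hε1, hεt⟩ : ∃ ε : ℝ, 0 < ε ∧ ε ≤ 1 ∧ ε < -t :=
      ⟨min 1 (-t / 2), lt_min one_pos (by linarith), min_le_left _ _,
        lt_of_le_of_lt (min_le_right _ _) (by linarith)⟩
    have h1 := h (-ε) (by linarith)
    rw [eventually_nhdsWithin_iff] at h1
    obtain ⟨R1, hR1, h1⟩ := Metric.eventually_nhds_iff.1 h1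
    obtain ⟨R2, hR2, hV⟩ := Metric.isOpen_iff.1 hVo x hxV
    obtain ⟨R, hR, hRR1, hRR2, hRL⟩ : ∃ R : ℝ, 0 < R ∧ R ≤ R1 ∧ R ≤ R2 ∧ L * R ≤ (c - r) / 2 := by
      refine ⟨min (min R1 R2) ((c - r) / 2 / (L + 1)), lt_min (lt_min hR1 hR2)
        (div_pos (by linarith) (by positivity)),
        (min_le_left _ _).trans (min_le_left _ _), (min_le_left _ _).trans (min_le_right _ _), ?_⟩
      have h2 : min (min R1 R2) ((c - r) / 2 / (L + 1)) ≤ (c - r) / 2 / (L + 1) := min_le_right _ _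
      have h3 : 0 < min (min R1 R2) ((c - r) / 2 / (L + 1)) := lt_min (lt_min hR1 hR2)
        (div_pos (by linarith) (by positivity))
      rw [le_div_iff₀ (by positivity)] at h2
      linarith
    obtain ⟨η, hη, hη1, hη2, hη3⟩ : ∃ η : ℝ, 0 < η ∧ η ≤ a / 2 * (R / 2) ∧ η ≤ δ ∧
        lam₀ * η ≤ (c - r) / 2 := by
      refine ⟨min (min (a / 2 * (R / 2)) δ) ((c - r) / 2 / lam₀), lt_min (lt_min (by positivity) hδ)
        (div_pos (by linarith) hlam₀),
        (min_le_left _ _).trans (min_le_left _ _), (min_le_left _ _).trans (min_le_right _ _), ?_⟩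
      have h2 : min (min (a / 2 * (R / 2)) δ) ((c - r) / 2 / lam₀) ≤ (c - r) / 2 / lam₀ :=
        min_le_right _ _
      rw [le_div_iff₀ hlam₀] at h2
      linarith
    have hφx : Tendsto φ (𝓝 x) (𝓝 0) := by
      have := hφcont x ⟨hxM, hxA⟩
      rwa [ContinuousAt, hx0] at this
    have hev : ∀ᶠ y in 𝓝[A \ {x}] x, φ y < ENNReal.ofReal η :=
      (hφx.eventually (gt_mem_nhds (ENNReal.ofReal_pos.2 hη))).filter_mono nhdsWithin_le_nhds
    have hball : ∀ᶠ y in 𝓝[A \ {x}] x, y ∈ ball x (R / 2) :=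
      mem_nhdsWithin_of_mem_nhds (ball_mem_nhds x (by positivity))
    filter_upwards [hev, hball, self_mem_nhdsWithin] with y hyη hyR hyA
    have hyt : φ y ≠ ⊤ := hyη.ne_top
    rw [ENNReal.lt_ofReal_iff_toReal_lt hyt] at hyη
    rw [mem_ball] at hyR
    have hyV : y ∈ V := hV (by rw [mem_ball]; linarith)
    have hdyx : 0 < dist y x := dist_pos.2 hyA.2
    obtain ⟨z, hzA, hzy, hzmin⟩ := ekeland_aux_s3 A hA φ hφlsc (Real.toNNReal (a / 2))
      (Real.toNNReal_pos.2 (half_pos ha)) y hyA.1 hyt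
    have conv : ∀ u v : X, φ u ≠ ⊤ → φ v ≠ ⊤ →
        (φ u + ((Real.toNNReal (a / 2)) : ℝ≥0∞) * edist u v ≤ φ v ↔
          (φ u).toReal + a / 2 * dist u v ≤ (φ v).toReal) := by
      intro u v hu hv
      have hne : ((Real.toNNReal (a / 2)) : ℝ≥0∞) * edist u v ≠ ⊤ :=
        ENNReal.mul_ne_top ENNReal.coe_ne_top (edist_ne_top _ _)
      rw [← ENNReal.toReal_le_toReal (ENNReal.add_ne_top.2 ⟨hu, hne⟩) hv,
        ENNReal.toReal_add hu hne, ENNReal.toReal_mul, ENNReal.coe_toReal, ← dist_edist,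
        Real.coe_toNNReal _ (half_pos ha).le]
    have hzt : φ z ≠ ⊤ := ne_top_of_le_ne_top hyt (le_trans le_self_add hzy)
    rw [conv z y hzt hyt] at hzy
    have hz0 : 0 ≤ (φ z).toReal := ENNReal.toReal_nonneg
    have hdzy0 : 0 ≤ dist z y := dist_nonneg
    have hdzy : dist z y < R / 2 := by
      have h2 : a / 2 * dist z y < a / 2 * (R / 2) := by linarith
      exact lt_of_mul_lt_mul_left h2 (by positivity)
    have hzφ : (φ z).toReal < η := by
      have : 0 ≤ a / 2 * dist z y := by positivity
      linarith
    have htri := dist_triangle z y x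
    have hzx : dist z x < R := by linarith
    have hzV : z ∈ V := hV (by rw [mem_ball]; linarith)
    have hzI := hIreal z (hVtop z hzV)
    have hzM : z ∈ M := by
      by_contra hzM
      have h2 : Φ lam₀ z < (c : EReal) := by
        rw [hΦreal lam₀ z _ hzI hzt, EReal.coe_lt_coe_iff]
        have h3 := hLip z hzV x hxV
        have h4 : L * dist z x ≤ L * R := mul_le_mul_of_nonneg_left hzx.le hL0
        have h5 : lam₀ * (φ z).toReal < lam₀ * η := mul_lt_mul_of_pos_left hzφ hlam₀
        linarith
      have h3 : φ z < ENNReal.ofReal δ := by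
        rw [ENNReal.lt_ofReal_iff_toReal_lt hzt]; linarith
      have hne : ∀ᶠ w in 𝓝[A \ {z}] z, w ∈ A \ {z} := self_mem_nhdsWithin
      obtain ⟨w, ⟨hwt, hw⟩, hwA⟩ := ((hdesc' z hzA hzM h2 h3).and_eventually hne).exists
      exact hwA.2 (hzmin w hwA.1 ((conv w z hwt hzt).2 (by linarith)))
    have hIz : r - ε * dist z x ≤ (I z).toReal := by
      by_cases hzx' : z = x
      · rw [hzx']; simp [hr]
      · have h2 := h1 (lt_of_lt_of_le hzx hRR1) ⟨⟨hzM, hzA⟩, hzx'⟩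
        rw [hzI, EReal.coe_lt_coe_iff] at h2
        linarith
    rw [hΦreal lam y _ (hIreal y (hVtop y hyV)) hyt, EReal.coe_lt_coe_iff]
    have h3 := hLip z hzV y hyV
    have h4 : lam * (a / 2 * dist z y) ≤ lam * (φ y).toReal :=
      mul_le_mul_of_nonneg_left (by linarith) hlpos.le
    have h5 : (L + 1) * dist z y ≤ lam * (a / 2) * dist z y :=
      mul_le_mul_of_nonneg_right hlk hdzy0
    have h6 : ε * dist z x ≤ ε * (dist z y + dist y x) := mul_le_mul_of_nonneg_left htri hε0.le
    have h7 : ε * dist z y ≤ 1 * dist z y := mul_le_mul_of_nonneg_right hε1 hdzy0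
    have h8 : ε * dist y x < -t * dist y x := mul_lt_mul_of_pos_right hεt hdyx
    linarith
end

section
/- Suppose X is complete, A is closed, I and φ are lower semicontinuous on A, φ is continuous at every point of Ω, and there exist c > I*, λ₀ > 0 and δ > 0 such that I is Lipschitz continuous with Lipschitz constant L on an open set containing S_{λ₀}(c) ∩ Ω_δ, there exists a > 0 such that φ↓_A(x) ≤ −a for all x ∈ S_{λ₀}(c) ∩ (Ω_δ \ Ω), and Φ_{λ₀} is bounded below on A. Let x* ∈ S_{λ₀}(c) ∩ Ω be an inf-stationary point of I on Ω. Then for any L' > L there exists r > 0 such that I(x) − I(x*) ≥ −L'·dist(x,Ω) − (L' − L)·d(x,x*) for all x ∈ B(x*,r), where B(x*,r) = {y ∈ X : d(y,x*) ≤ r} and dist(x,Ω) = inf_{y∈Ω} d(x,y). -/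
open Filter Metric Set Topology
open scoped ENNReal NNReal

/-- Lemma A.2: under the assumptions of the main theorem, if `x* ∈ S_{λ₀}(c) ∩ Ω` is an
inf-stationary point of `I` on `Ω`, then for any `L' > L` there exists `r > 0` such that
`I(x) − I(x*) ≥ −L'·dist(x,Ω) − (L' − L)·d(x,x*)` for all `x ∈ B(x*, r)`. -/
theorem exact_penalty_lipschitz_estimate
    {X : Type*} [MetricSpace X] [CompleteSpace X]
    (M A : Set X) (hA : IsClosed A)
    (I : X → EReal) (hInotbot : ∀ x, I x ≠ ⊥)
    (φ : X → ℝ≥0∞) (hφM : ∀ x, φ x = 0 ↔ x ∈ M)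
    (Φ : ℝ → X → EReal)
    (hΦdef : ∀ lam x, Φ lam x = I x + (lam : EReal) * ((φ x : ℝ≥0∞) : EReal))
    (hIlsc : LowerSemicontinuousOn I A) (hφlsc : LowerSemicontinuousOn φ A)
    (hφcont : ∀ x ∈ M ∩ A, ContinuousAt φ x)
    -- the problem (P) has a globally optimal solution with finite optimal value
    (xs : X) (hxs : xs ∈ M ∩ A) (hxsmin : ∀ y ∈ M ∩ A, I xs ≤ I y) (hxsfin : I xs ≠ ⊤)
    (c lam₀ δ : ℝ) (hc : I xs < ((c : ℝ) : EReal)) (hlam₀ : 0 < lam₀) (hδ : 0 < δ)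
    -- (i) `I` is Lipschitz continuous with constant `L` on an open set containing
    -- `S_{λ₀}(c) ∩ Ω_δ`
    (L : ℝ≥0)
    (hLip : ∃ V : Set X, IsOpen V ∧
      {x | x ∈ A ∧ Φ lam₀ x < ((c : ℝ) : EReal) ∧ φ x < ENNReal.ofReal δ} ⊆ V ∧
      (∀ x ∈ V, I x ≠ ⊤) ∧ LipschitzOnWith L (fun x => (I x).toReal) V)
    -- (ii) the rate of steepest descent of `φ` w.r.t. `A` is ≤ −a < 0 on `S_{λ₀}(c) ∩ (Ω_δ \ Ω)`
    (a : ℝ) (ha : 0 < a)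
    (hdesc : ∀ x ∈ {x | x ∈ A ∧ Φ lam₀ x < ((c : ℝ) : EReal) ∧ φ x < ENNReal.ofReal δ} \ (M ∩ A),
        rateOfDescent (fun y => ((φ y : ℝ≥0∞) : EReal)) A x ≤ ((-a : ℝ) : EReal))
    -- (iii) `Φ_{λ₀}` is bounded below on `A`
    (hbdd : ∃ b : ℝ, ∀ x ∈ A, ((b : ℝ) : EReal) ≤ Φ lam₀ x) :
    ∀ xstar ∈ {x | x ∈ A ∧ Φ lam₀ x < ((c : ℝ) : EReal) ∧ φ x < ENNReal.ofReal δ} ∩ (M ∩ A),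
      (0 : EReal) ≤ rateOfDescent I (M ∩ A) xstar →
      ∀ L' : ℝ, (L : ℝ) < L' →
        ∃ r : ℝ, 0 < r ∧ ∀ x ∈ Metric.closedBall xstar r,
          ((-(L' * Metric.infDist x (M ∩ A)) - (L' - (L : ℝ)) * dist x xstar : ℝ) : EReal)
            ≤ I x - I xstar := by
  rintro x0 ⟨hx0S, hx0Ω⟩ hst L' hL'
  obtain ⟨V, hVo, hSV, hVtop, hV⟩ := hLip
  have hx0V : x0 ∈ V := hSV hx0S
  obtain ⟨R, hR, hRV⟩ := Metric.isOpen_iff.1 hVo x0 hx0V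
  have hco : ∀ x ∈ V, I x = (((I x).toReal : ℝ) : EReal) := fun x hx =>
    (EReal.coe_toReal (hVtop x hx) (hInotbot x)).symm
  have hL0 : (0 : ℝ) ≤ L := L.2
  obtain ⟨e, he⟩ : ∃ e : ℝ, e = L' - L := ⟨_, rfl⟩
  have hepos : 0 < e := by linarith
  have hlt : ((-(e / 4) : ℝ) : EReal) < rateOfDescent I (M ∩ A) x0 := by
    refine lt_of_lt_of_le ?_ hst
    have : (-(e / 4) : ℝ) < 0 := by linarith
    exact_mod_cast this
  have hev := Filter.eventually_lt_of_lt_liminf hlt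
  rw [eventually_nhdsWithin_iff, Metric.eventually_nhds_iff] at hev
  obtain ⟨ρ, hρ, hev⟩ := hev
  have hstat : ∀ y ∈ M ∩ A, dist y x0 < ρ → dist y x0 < R →
      -(e / 4) * dist y x0 ≤ (I y).toReal - (I x0).toReal := by
    intro y hy h1 h2
    by_cases hyx : y = x0
    · subst hyx; simp
    have h := hev h1 ⟨hy, hyx⟩
    rw [hco y (hRV h2), hco x0 hx0V] at h
    have h' : -(e / 4) < ((I y).toReal - (I x0).toReal) * (dist y x0)⁻¹ := by
      exact_mod_cast h
    have hd : 0 < dist y x0 := dist_pos.2 hyx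
    rw [← div_eq_mul_inv, lt_div_iff₀ hd] at h'
    exact h'.le
  have hm : 0 < min ρ R := lt_min hρ hR
  refine ⟨min ρ R / 4, by positivity, fun x hx => ?_⟩
  rw [Metric.mem_closedBall] at hx
  have hmρ := min_le_left ρ R
  have hmR := min_le_right ρ R
  have hxV : x ∈ V := hRV (by rw [Metric.mem_ball]; linarith)
  rw [hco x hxV, hco x0 hx0V, ← EReal.coe_sub, EReal.coe_le_coe_iff]
  by_cases hxx : x = x0
  · subst hxx
    simp [Metric.infDist_zero_of_mem hx0Ω]
  have hd : 0 < dist x x0 := dist_pos.2 hxx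
  have hL'pos : 0 < L' := by linarith
  obtain ⟨η, hη⟩ : ∃ η : ℝ, η = e / (2 * L') := ⟨_, rfl⟩
  have hηpos : 0 < η := by rw [hη]; positivity
  have hηL : L' * η = e / 2 := by rw [hη]; field_simp
  have hη1 : η ≤ 1 := by
    rw [hη, div_le_one (by positivity)]; linarith
  have hLη : L * η ≤ e / 2 := by nlinarith
  obtain ⟨y, hy, hxy⟩ := (Metric.infDist_lt_iff (s := M ∩ A) (x := x) ⟨x0, hx0Ω⟩).1
    (lt_add_of_pos_right (Metric.infDist x (M ∩ A)) (mul_pos hηpos hd))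
  have hD : Metric.infDist x (M ∩ A) ≤ dist x x0 := Metric.infDist_le_dist_of_mem hx0Ω
  have hD0 : 0 ≤ Metric.infDist x (M ∩ A) := Metric.infDist_nonneg
  have htri : dist y x0 ≤ dist x y + dist x x0 := by
    rw [dist_comm x y]; exact dist_triangle _ _ _
  have hηd : η * dist x x0 ≤ dist x x0 := by nlinarith
  have hyd : dist y x0 < min ρ R := by linarith
  have hs := hstat y hy (by linarith) (by linarith)
  have hyV : y ∈ V := hRV (by rw [Metric.mem_ball]; linarith)
  have hl := hV.dist_le_mul x hxV y hyV
  rw [Real.dist_eq] at hl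
  have hl' := (abs_le.1 hl).1
  have h1 : L * dist x y ≤ L * Metric.infDist x (M ∩ A) + e / 2 * dist x x0 := by
    have := mul_le_mul_of_nonneg_left hxy.le hL0
    have := mul_le_mul_of_nonneg_right hLη hd.le
    nlinarith
  have h2 : e / 4 * dist y x0 ≤ e / 4 * (Metric.infDist x (M ∩ A) + 2 * dist x x0) :=
    mul_le_mul_of_nonneg_left (by linarith) (by linarith)
  have h3 : 0 ≤ e * Metric.infDist x (M ∩ A) := by positivity
  have hL'e : L' = L + e := by linarith
  rw [hL'e]
  nlinarith
end
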